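/- arXiv:2602.22732 — 3 statements merged into one kernel-verified Lean document; each statement's English description precedes it below -/
import Mathlib

section
/- Let s be a finite index set, let g_j be a real number for each j ∈ s, let c be a real number, and let M_j ≥ 0 be real weights with ∑_{j∈s} M_j ≤ 1. Then the per-sample RSPO chain of inequalities holds: ∑_{j∈s} M_j · 𝕀(c < g_j) ≤ ∑_{j∈s} M_j · log₂(1 + exp(g_j − c)) ≤ log₂(1 + ∑_{j∈s} M_j · exp(g_j − c)), where 𝕀(c < g_j) equals 1 if c < g_j and 0 otherwise. -/
/-- Per-sample RSPO chain of inequalities: for a finite index set `s`, scores `g j`, a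
threshold `c`, and nonnegative weights `M j` with `∑ j ∈ s, M j ≤ 1`,
`∑ j ∈ s, M j * 𝕀(c < g j) ≤ ∑ j ∈ s, M j * log₂ (1 + exp (g j − c))
  ≤ log₂ (1 + ∑ j ∈ s, M j * exp (g j − c))`. -/
theorem rspo_per_sample_chain {ι : Type*} (s : Finset ι) (g : ι → ℝ) (c : ℝ) (M : ι → ℝ)
    (hM : ∀ j ∈ s, 0 ≤ M j) (hMsum : ∑ j ∈ s, M j ≤ 1) :
    (∑ j ∈ s, M j * (if c < g j then (1 : ℝ) else 0)) ≤
        ∑ j ∈ s, M j * Real.logb 2 (1 + Real.exp (g j - c)) ∧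
    (∑ j ∈ s, M j * Real.logb 2 (1 + Real.exp (g j - c))) ≤
        Real.logb 2 (1 + ∑ j ∈ s, M j * Real.exp (g j - c)) := by
  constructor
  · refine Finset.sum_le_sum fun j hj => mul_le_mul_of_nonneg_left ?_ (hM j hj)
    have he := Real.exp_pos (g j - c)
    split_ifs with h
    · rw [Real.le_logb_iff_rpow_le (by norm_num) (by linarith), Real.rpow_one]
      have := Real.add_one_le_exp (g j - c)
      linarith
    · exact Real.logb_nonneg (by norm_num) (by linarith)
  · have key := strictConcaveOn_log_Ioi.concaveOn.map_add_sum_le (t := s) (w := M)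
      (p := fun j => 1 + Real.exp (g j - c)) (v := 1 - ∑ j ∈ s, M j) (q := 1) hM
      (by ring) (fun j _ => by
        have := Real.exp_pos (g j - c)
        simp only [Set.mem_Ioi]; linarith) (by linarith) (by simp)
    simp only [smul_eq_mul, Real.log_one, mul_zero, zero_add, mul_one, mul_add,
      Finset.sum_add_distrib] at key
    have e : 1 - ∑ j ∈ s, M j + (∑ j ∈ s, M j + ∑ j ∈ s, M j * Real.exp (g j - c))
        = 1 + ∑ j ∈ s, M j * Real.exp (g j - c) := by ring
    rw [e] at key
    simp only [Real.logb, ← mul_div_assoc, ← Finset.sum_div]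
    exact div_le_div_of_nonneg_right key (Real.log_nonneg (by norm_num))
end

section
/- Let n be a natural number, let g_i be a real number (score) for each i ∈ {1, …, n}, for each i let E_i ⊆ {1, …, n} be a set of indices, and let M_{ij} ≥ 0 be real weights satisfying ∑_{j∈E_i} M_{ij} ≤ 1 for every i. Then ∑_{i=1}^n ∑_{j∈E_i} M_{ij} · 𝕀(g_i < g_j) ≤ ∑_{i=1}^n ∑_{j∈E_i} M_{ij} · log₂(1 + exp(g_j − g_i)) ≤ ∑_{i=1}^n log₂(1 + ∑_{j∈E_i} M_{ij} · exp(g_j − g_i)), where 𝕀(g_i < g_j) equals 1 if g_i < g_j and 0 otherwise. -/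
theorem rspo_aux {ι : Type*} (s : Finset ι) (m x : ι → ℝ) (hm : ∀ j ∈ s, 0 ≤ m j)
    (hs : ∑ j ∈ s, m j ≤ 1) (hx : ∀ j, 0 < x j) :
    ∑ j ∈ s, m j * Real.log (1 + x j) ≤ Real.log (1 + ∑ j ∈ s, m j * x j) := by
  have hS : 0 ≤ ∑ j ∈ s, m j * x j :=
    Finset.sum_nonneg fun j hj => mul_nonneg (hm j hj) (hx j).le
  set S := ∑ j ∈ s, m j * x j with hSdef
  have hA : 0 < 1 + S := by linarith
  have h1 : ∀ j ∈ s, m j * Real.log (1 + x j) ≤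
      m j * (Real.log (1 + S) + (1 + S)⁻¹ - 1) + m j * x j * (1 + S)⁻¹ := by
    intro j hj
    have hp : 0 < 1 + x j := by linarith [hx j]
    have h := Real.log_le_sub_one_of_pos (div_pos hp hA)
    rw [Real.log_div hp.ne' hA.ne', div_eq_mul_inv] at h
    have h' : Real.log (1 + x j) ≤ Real.log (1 + S) + (1 + S)⁻¹ - 1 + x j * (1 + S)⁻¹ := by
      linarith
    have := mul_le_mul_of_nonneg_left h' (hm j hj)
    linarith
  have h2 := Finset.sum_le_sum h1
  rw [Finset.sum_add_distrib, ← Finset.sum_mul, ← Finset.sum_mul, ← hSdef] at h2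
  have h3 := Real.one_sub_inv_le_log_of_pos hA
  have h4 : (1 + S) * (1 + S)⁻¹ = 1 := mul_inv_cancel₀ hA.ne'
  nlinarith [mul_nonneg (sub_nonneg.2 hs) (sub_nonneg.2 h3)]

/-- RSPO upper-bound chain over a list of `n` items: for scores `g i`, index sets `E i`, and
nonnegative weights `M i j` with `∑ j ∈ E i, M i j ≤ 1` for every `i`,
`∑ i ∑ j ∈ E i, M i j * 𝕀(g i < g j) ≤ ∑ i ∑ j ∈ E i, M i j * log₂ (1 + exp (g j − g i))
  ≤ ∑ i, log₂ (1 + ∑ j ∈ E i, M i j * exp (g j − g i))`. -/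
theorem rspo_chain (n : ℕ) (g : Fin n → ℝ) (E : Fin n → Finset (Fin n))
    (M : Fin n → Fin n → ℝ)
    (hM : ∀ i, ∀ j ∈ E i, 0 ≤ M i j) (hMsum : ∀ i, ∑ j ∈ E i, M i j ≤ 1) :
    (∑ i, ∑ j ∈ E i, M i j * (if g i < g j then (1 : ℝ) else 0)) ≤
        ∑ i, ∑ j ∈ E i, M i j * Real.logb 2 (1 + Real.exp (g j - g i)) ∧
    (∑ i, ∑ j ∈ E i, M i j * Real.logb 2 (1 + Real.exp (g j - g i))) ≤
        ∑ i, Real.logb 2 (1 + ∑ j ∈ E i, M i j * Real.exp (g j - g i)) := by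
  constructor
  · refine Finset.sum_le_sum fun i _ => Finset.sum_le_sum fun j hj => ?_
    refine mul_le_mul_of_nonneg_left ?_ (hM i j hj)
    have hp := Real.exp_pos (g j - g i)
    split_ifs with h
    · rw [Real.le_logb_iff_rpow_le (by norm_num) (by linarith), Real.rpow_one]
      have := Real.one_le_exp (sub_nonneg.2 h.le)
      linarith
    · exact Real.logb_nonneg (by norm_num) (by linarith)
  · refine Finset.sum_le_sum fun i _ => ?_
    have h := rspo_aux (E i) (M i) (fun j => Real.exp (g j - g i)) (hM i) (hMsum i)
      (fun j => Real.exp_pos _)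
    simp only [Real.logb, ← mul_div_assoc]
    rw [← Finset.sum_div]
    exact div_le_div_of_nonneg_right h (Real.log_nonneg (by norm_num))
end

section
/- Let n be a natural number and let g_i, v_i, G_i be real numbers for i ∈ {1, …, n} with 0 ≤ G_i ≤ 1 for all i. Define D_k = log₂(1 + k) for natural numbers k, and for each i let E_i = { j ∈ {1, …, n} : v_j < v_i }. Define the Lambda weights M_{ij} = |1/D_{|i−j|} − 1/D_{|i−j|+1}| · |G_i − G_j|. Assume that for each i, the map j ↦ |i − j| is injective on E_i. Then the RSPO upper-bound chain holds: ∑_{i=1}^n ∑_{j∈E_i} M_{ij} · 𝕀(g_i < g_j) ≤ ∑_{i=1}^n ∑_{j∈E_i} M_{ij} · log₂(1 + exp(g_j − g_i)) ≤ ∑_{i=1}^n log₂(1 + ∑_{j∈E_i} M_{ij} · exp(g_j − g_i)), where 𝕀(g_i < g_j) equals 1 if g_i < g_j and 0 otherwise. -/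
/-- The DCG position discount `D k = log₂ (1 + k)`. -/
noncomputable def dcgD (k : ℕ) : ℝ := Real.logb 2 (1 + (k : ℝ))

theorem dcgD_pos (k : ℕ) (hk : 1 ≤ k) : 0 < dcgD k := by
  unfold dcgD
  have : (1 : ℝ) ≤ k := by exact_mod_cast hk
  exact Real.logb_pos (by norm_num) (by linarith)

theorem dcgD_one : dcgD 1 = 1 := by
  unfold dcgD
  norm_num

theorem dcgD_step (k : ℕ) (hk : 1 ≤ k) : 0 ≤ 1 / dcgD k - 1 / dcgD (k + 1) := by
  have h : dcgD k ≤ dcgD (k + 1) := by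
    unfold dcgD
    apply Real.logb_le_logb_of_le (by norm_num) (by positivity)
    push_cast
    linarith
  have := one_div_le_one_div_of_le (dcgD_pos k hk) h
  linarith

theorem dcg_tele (m : ℕ) :
    ∑ k ∈ Finset.Ico 1 (m + 1), |1 / dcgD k - 1 / dcgD (k + 1)| = 1 - 1 / dcgD (m + 1) := by
  induction m with
  | zero => simp [dcgD_one]
  | succ m ih =>
    rw [Finset.sum_Ico_succ_top (by omega), ih, abs_of_nonneg (dcgD_step _ (by omega))]
    ring

theorem dcg_jensen (s : Finset ℕ) (m x : ℕ → ℝ) (hm : ∀ j ∈ s, 0 ≤ m j)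
    (hx : ∀ j ∈ s, 0 < x j) (h1 : ∑ j ∈ s, m j ≤ 1) :
    ∑ j ∈ s, m j * Real.log (1 + x j) ≤ Real.log (1 + ∑ j ∈ s, m j * x j) := by
  have hS0 : 0 ≤ ∑ j ∈ s, m j * x j :=
    Finset.sum_nonneg fun j hj => mul_nonneg (hm j hj) (hx j hj).le
  set S := 1 + ∑ j ∈ s, m j * x j with hS
  have hSp : 0 < S := by linarith
  have key : ∀ y : ℝ, 0 < y → Real.log y ≤ Real.log S + y / S - 1 := by
    intro y hy
    have h := Real.log_le_sub_one_of_pos (div_pos hy hSp)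
    rw [Real.log_div hy.ne' hSp.ne'] at h
    linarith
  have hone := key 1 one_pos
  rw [Real.log_one] at hone
  have hsum : ∑ j ∈ s, m j * Real.log (1 + x j)
      ≤ ∑ j ∈ s, m j * (Real.log S + (1 + x j) / S - 1) :=
    Finset.sum_le_sum fun j hj =>
      mul_le_mul_of_nonneg_left (key _ (by linarith [hx j hj])) (hm j hj)
  have heq : ∑ j ∈ s, m j * (Real.log S + (1 + x j) / S - 1)
      = (∑ j ∈ s, m j) * (Real.log S + 1 / S - 1) + (∑ j ∈ s, m j * x j) / S := by
    rw [Finset.sum_mul, Finset.sum_div, ← Finset.sum_add_distrib]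
    exact Finset.sum_congr rfl fun j _ => by ring
  have hX : (∑ j ∈ s, m j * x j) / S = 1 - 1 / S := by
    field_simp
    linarith
  rw [heq, hX] at hsum
  nlinarith

/-- RSPO upper-bound chain with Lambda weights: for indices `i ∈ {1, …, n}`, scores `g i`,
rewards `v i`, normalized gains `G i ∈ [0, 1]`, negative sets
`E i = { j ∈ {1,…,n} : v j < v i }`, and Lambda weights
`M i j = |1/D_{|i−j|} − 1/D_{|i−j|+1}| * |G i − G j|`, assuming `j ↦ |i − j|` is injective
on `E i` for each `i`, the chain
`∑ i ∑ j ∈ E i, M i j * 𝕀(g i < g j) ≤ ∑ i ∑ j ∈ E i, M i j * log₂ (1 + exp (g j − g i))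
  ≤ ∑ i, log₂ (1 + ∑ j ∈ E i, M i j * exp (g j − g i))` holds. -/
theorem rspo_lambda_chain (n : ℕ) (g v G : ℕ → ℝ)
    (hG : ∀ i ∈ Finset.Icc 1 n, 0 ≤ G i ∧ G i ≤ 1)
    (E : ℕ → Finset ℕ) (hE : ∀ i, E i = (Finset.Icc 1 n).filter (fun j => v j < v i))
    (M : ℕ → ℕ → ℝ)
    (hM : ∀ i j, M i j =
      |1 / dcgD (Nat.dist i j) - 1 / dcgD (Nat.dist i j + 1)| * |G i - G j|)
    (hinj : ∀ i ∈ Finset.Icc 1 n, Set.InjOn (fun j => Nat.dist i j) (E i)) :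
    (∑ i ∈ Finset.Icc 1 n, ∑ j ∈ E i, M i j * (if g i < g j then (1 : ℝ) else 0)) ≤
        ∑ i ∈ Finset.Icc 1 n, ∑ j ∈ E i, M i j * Real.logb 2 (1 + Real.exp (g j - g i)) ∧
    (∑ i ∈ Finset.Icc 1 n, ∑ j ∈ E i, M i j * Real.logb 2 (1 + Real.exp (g j - g i))) ≤
        ∑ i ∈ Finset.Icc 1 n, Real.logb 2 (1 + ∑ j ∈ E i, M i j * Real.exp (g j - g i)) := by
  have hMn : ∀ i j, 0 ≤ M i j := fun i j => by rw [hM]; positivity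
  have h2 : 0 < Real.log 2 := Real.log_pos (by norm_num)
  constructor
  · refine Finset.sum_le_sum fun i _ => Finset.sum_le_sum fun j _ =>
      mul_le_mul_of_nonneg_left ?_ (hMn i j)
    have he := Real.exp_pos (g j - g i)
    split_ifs with h
    · rw [Real.le_logb_iff_rpow_le (by norm_num) (by linarith), Real.rpow_one]
      have := Real.one_le_exp (show 0 ≤ g j - g i by linarith)
      linarith
    · exact Real.logb_nonneg (by norm_num) (by linarith)
  · refine Finset.sum_le_sum fun i hi => ?_
    have hs : ∑ j ∈ E i, M i j ≤ 1 := by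
      have ha : ∑ j ∈ E i, M i j ≤
          ∑ j ∈ E i, |1 / dcgD (Nat.dist i j) - 1 / dcgD (Nat.dist i j + 1)| := by
        refine Finset.sum_le_sum fun j hj => ?_
        rw [hM]
        rw [hE] at hj
        have hi' := hG i hi
        have hj' := hG j (Finset.mem_filter.1 hj).1
        exact mul_le_of_le_one_right (abs_nonneg _)
          (abs_le.2 ⟨by linarith, by linarith⟩)
      have hb : ∑ j ∈ E i, |1 / dcgD (Nat.dist i j) - 1 / dcgD (Nat.dist i j + 1)| =
          ∑ k ∈ (E i).image (fun j => Nat.dist i j), |1 / dcgD k - 1 / dcgD (k + 1)| :=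
        (Finset.sum_image (f := fun k => |1 / dcgD k - 1 / dcgD (k + 1)|) (hinj i hi)).symm
      have hc : (E i).image (fun j => Nat.dist i j) ⊆ Finset.Ico 1 (n + 1) := by
        intro k hk
        obtain ⟨j, hj, rfl⟩ := Finset.mem_image.1 hk
        rw [hE, Finset.mem_filter, Finset.mem_Icc] at hj
        rw [Finset.mem_Icc] at hi
        have hne : i ≠ j := by
          rintro rfl
          exact lt_irrefl _ hj.2
        simp only [Nat.dist, Finset.mem_Ico]
        omega
      have hd := Finset.sum_le_sum_of_subset_of_nonneg hc
        (f := fun k => |1 / dcgD k - 1 / dcgD (k + 1)|) (fun _ _ _ => abs_nonneg _)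
      rw [dcg_tele] at hd
      have := one_div_pos.2 (dcgD_pos (n + 1) (by omega))
      linarith
    have hJ := dcg_jensen (E i) (M i) (fun j => Real.exp (g j - g i))
      (fun j _ => hMn i j) (fun j _ => Real.exp_pos _) hs
    simp only [Real.logb, ← mul_div_assoc, ← Finset.sum_div]
    exact div_le_div_of_nonneg_right hJ h2.le
end
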